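/- arXiv:2512.07621 — 4 statements merged into one kernel-verified Lean document; each statement's English description precedes it below -/
import Mathlib

section
/- For every X in the subspace D₀ := span{X^{01},…,X^{0N₀}}, g^h(X) converges to g^0(X) as h → 0⁺. -/
/-! Extending a decomposition of `v` over the `X 0 j` by zero gives `g^h(v) ≤ g^0(v)`.
Conversely, the map `u ↦ ∑ j, u j • X 0 j` has a linear right inverse `S` on its range `D₀`. If
`u` is admissible for `g^h(v)` with cost `c` and `h ≤ 1`, every coefficient of level `i ≥ 1` is at
most `h √c` in absolute value. The part of the sum of level `i ≥ 1` lies in `D₀` because `v` does,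
so `S` moves it into the level-`0` coefficients, which changes these by at most `M h √c` for a
constant `M` (`exists_correction`). Hence `g^0(v) ≤ (1 + M h)² c`, so
`g^0(v) / (1 + M h)² ≤ g^h(v) ≤ g^0(v)` (`gzero_le_gh`, `gh_le_gzero`), and a squeeze concludes. -/

open scoped BigOperators

/-- The approximating Riemannian metric `g^h`. -/
noncomputable def gh (d r : ℕ) (N : ℕ → ℕ)
    (X : (i : ℕ) → Fin (N i) → (Fin d → ℝ)) (h : ℝ) (v : Fin d → ℝ) : ℝ :=
  sInf { c : ℝ | ∃ u : (i : ℕ) → Fin (N i) → ℝ,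
    (∑ i ∈ Finset.range (r + 1), ∑ j, u i j • X i j) = v ∧
    c = ∑ i ∈ Finset.range (r + 1), h ^ (-(2 * (i : ℤ))) * ∑ j, (u i j) ^ 2 }

/-- The sub-Riemannian metric `g^0` on the span of `X^{01}, …, X^{0N₀}`. -/
noncomputable def gzero (d : ℕ) (N₀ : ℕ)
    (X₀ : Fin N₀ → (Fin d → ℝ)) (v : Fin d → ℝ) : ℝ :=
  sInf { c : ℝ | ∃ u : Fin N₀ → ℝ,
    (∑ j, u j • X₀ j) = v ∧ c = ∑ j, (u j) ^ 2 }

lemma exists_right_inverse_on_range {E F : Type*} [AddCommGroup E] [Module ℝ E]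
    [AddCommGroup F] [Module ℝ F] (T : E →ₗ[ℝ] F) :
    ∃ S : F →ₗ[ℝ] E, ∀ y ∈ LinearMap.range T, T (S y) = y := by
  obtain ⟨g, hg⟩ := T.rangeRestrict.exists_rightInverse_of_surjective T.range_rangeRestrict
  obtain ⟨S, hS⟩ := LinearMap.exists_extend g
  refine ⟨S, fun y hy => ?_⟩
  have h1 : S y = g ⟨y, hy⟩ := LinearMap.congr_fun hS ⟨y, hy⟩
  have h2 := congrArg Subtype.val (LinearMap.congr_fun hg ⟨y, hy⟩)
  rw [h1]
  exact h2

lemma gh_cost_nonneg (r : ℕ) (N : ℕ → ℕ) {h : ℝ} (hh : 0 < h) (u : (i : ℕ) → Fin (N i) → ℝ) :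
    0 ≤ ∑ i ∈ Finset.range (r + 1), h ^ (-(2 * (i : ℤ))) * ∑ j, (u i j) ^ 2 := by
  positivity

lemma gzero_bddBelow {d n : ℕ} (X₀ : Fin n → (Fin d → ℝ)) (v : Fin d → ℝ) :
    BddBelow { c : ℝ | ∃ u : Fin n → ℝ, (∑ j, u j • X₀ j) = v ∧ c = ∑ j, (u j) ^ 2 } := by
  refine ⟨0, ?_⟩
  rintro _ ⟨u, -, rfl⟩
  positivity

lemma exists_coeff {d n : ℕ} (X₀ : Fin n → (Fin d → ℝ)) {v : Fin d → ℝ}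
    (hv : v ∈ Submodule.span ℝ (Set.range X₀)) : ∃ u : Fin n → ℝ, ∑ j, u j • X₀ j = v :=
  (Submodule.mem_span_range_iff_exists_fun ℝ).1 hv

/-- A level-`0` decomposition, extended by zero, is admissible for `g^h` at the same cost. -/
lemma exists_extension {d r : ℕ} {N : ℕ → ℕ} (X : (i : ℕ) → Fin (N i) → (Fin d → ℝ)) (h : ℝ)
    {v : Fin d → ℝ} {u : Fin (N 0) → ℝ} (hu : ∑ j, u j • X 0 j = v) :
    ∃ u' : (i : ℕ) → Fin (N i) → ℝ,
      (∑ i ∈ Finset.range (r + 1), ∑ j, u' i j • X i j) = v ∧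
      ∑ j, (u j) ^ 2 =
        ∑ i ∈ Finset.range (r + 1), h ^ (-(2 * (i : ℤ))) * ∑ j, (u' i j) ^ 2 := by
  refine ⟨fun i => match i with | 0 => u | _ + 1 => 0, ?_, ?_⟩
  · simp [Finset.sum_range_succ', hu]
  · simp [Finset.sum_range_succ']

lemma gh_le_gzero {d r : ℕ} {N : ℕ → ℕ} (X : (i : ℕ) → Fin (N i) → (Fin d → ℝ))
    {v : Fin d → ℝ} (hv : v ∈ Submodule.span ℝ (Set.range (X 0))) {h : ℝ} (hh : 0 < h) :
    gh d r N X h v ≤ gzero d (N 0) (X 0) v := by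
  obtain ⟨u₀, hu₀⟩ := exists_coeff _ hv
  refine csInf_le_csInf ?_ ⟨_, u₀, hu₀, rfl⟩ ?_
  · refine ⟨0, ?_⟩
    rintro _ ⟨u, -, rfl⟩
    exact gh_cost_nonneg r N hh u
  · rintro _ ⟨u, hu, rfl⟩
    exact exists_extension X h hu

/-- A decomposition of `v ∈ D₀` becomes a level-`0` decomposition when each `X i k` with `i ≥ 1` is
traded for a fixed vector `a i k` of level-`0` coefficients. Here `a i k = S (X i k)` for a linear
right inverse `S` of `u ↦ ∑ j, u j • X 0 j` on its range; a single `X i k` need not lie in `D₀`, but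
their combination in a decomposition of `v` does. -/
lemma exists_correction {d : ℕ} {N : ℕ → ℕ} (X : (i : ℕ) → Fin (N i) → (Fin d → ℝ)) :
    ∃ a : (i : ℕ) → Fin (N i) → EuclideanSpace ℝ (Fin (N 0)),
      ∀ (r : ℕ) (u : (i : ℕ) → Fin (N i) → ℝ) (v : Fin d → ℝ),
        v ∈ Submodule.span ℝ (Set.range (X 0)) →
        (∑ i ∈ Finset.range (r + 1), ∑ j, u i j • X i j) = v →
        ∑ j, (WithLp.toLp 2 (u 0) + ∑ i ∈ Finset.range r, ∑ k, u (i + 1) k • a (i + 1) k) j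
          • X 0 j = v := by
  let T := Fintype.linearCombination ℝ (X 0)
  obtain ⟨S, hS⟩ := exists_right_inverse_on_range T
  have hT : LinearMap.range T = Submodule.span ℝ (Set.range (X 0)) :=
    Fintype.range_linearCombination ℝ (X 0)
  refine ⟨fun i k => WithLp.toLp 2 (S (X i k)), fun r u v hv hu => ?_⟩
  rw [Finset.sum_range_succ'] at hu
  set w := ∑ i ∈ Finset.range r, ∑ j, u (i + 1) j • X (i + 1) j with hw
  have hTu : T (u 0) = ∑ j, u 0 j • X 0 j := Fintype.linearCombination_apply ..
  have hwmem : w ∈ LinearMap.range T := by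
    rw [eq_sub_of_add_eq hu, ← hTu]
    exact sub_mem (hT ▸ hv) ⟨_, rfl⟩
  have key : T (u 0 + S w) = v := by
    rw [map_add, hS w hwmem, hTu, add_comm, hu]
  rw [← key, Fintype.linearCombination_apply]
  refine Finset.sum_congr rfl fun j _ => ?_
  congr 1
  simp [hw, map_sum]

/-- The constant `M` is the sum of the norms of the correction vectors of `exists_correction`
over the levels `1, …, r`. -/
lemma gzero_le_gh {d r : ℕ} {N : ℕ → ℕ} (X : (i : ℕ) → Fin (N i) → (Fin d → ℝ)) :
    ∃ M : ℝ, 0 ≤ M ∧ ∀ v ∈ Submodule.span ℝ (Set.range (X 0)), ∀ h : ℝ, 0 < h → h ≤ 1 →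
      gzero d (N 0) (X 0) v / (1 + M * h) ^ 2 ≤ gh d r N X h v := by
  obtain ⟨a, ha⟩ := exists_correction X
  set M : ℝ := ∑ i ∈ Finset.range r, ∑ k, ‖a (i + 1) k‖ with hM
  have hM0 : 0 ≤ M := by positivity
  refine ⟨M, hM0, fun v hv h hh h1 => ?_⟩
  obtain ⟨u₀, hu₀⟩ := exists_coeff _ hv
  obtain ⟨u₁, hu₁, -⟩ := exists_extension (r := r) X h hu₀
  refine le_csInf ⟨_, u₁, hu₁, rfl⟩ ?_
  rintro c ⟨u, hu, hc⟩
  have hc0 : 0 ≤ c := hc ▸ gh_cost_nonneg r N hh u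
  have hterm : ∀ i ∈ Finset.range (r + 1), h ^ (-(2 * (i : ℤ))) * ∑ j, (u i j) ^ 2 ≤ c := by
    intro i hi
    rw [hc]
    exact Finset.single_le_sum
      (f := fun i : ℕ => h ^ (-(2 * (i : ℤ))) * ∑ j, (u i j) ^ 2)
      (fun i _ => by positivity) hi
  have hzero : ‖WithLp.toLp 2 (u 0)‖ ≤ √c := by
    have := hterm 0 (by simp)
    rw [EuclideanSpace.norm_eq]
    apply Real.sqrt_le_sqrt
    simpa using this
  have hcoef : ∀ i ∈ Finset.range r, ∀ k, |u (i + 1) k| ≤ h * √c := by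
    intro i hi k
    have h2 := hterm (i + 1) (by simpa using hi)
    have h3 : (u (i + 1) k) ^ 2 ≤ ∑ j, (u (i + 1) j) ^ 2 :=
      Finset.single_le_sum (f := fun j => (u (i + 1) j) ^ 2) (fun j _ => sq_nonneg _)
        (Finset.mem_univ k)
    have h4 : h ^ (-(2 : ℤ)) ≤ h ^ (-(2 * ((i + 1 : ℕ) : ℤ))) :=
      zpow_le_zpow_right_of_le_one₀ hh h1 (by push_cast; linarith)
    have h5 : h ^ (-(2 : ℤ)) * (u (i + 1) k) ^ 2 ≤ c := le_trans (by gcongr) h2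
    have h6 : (u (i + 1) k) ^ 2 ≤ h ^ 2 * c := by
      rw [zpow_neg, inv_mul_le_iff₀ (by positivity)] at h5
      exact_mod_cast h5
    refine abs_le_of_sq_le_sq ?_ (by positivity)
    rw [mul_pow, Real.sq_sqrt hc0]
    exact h6
  set z := WithLp.toLp 2 (u 0) + ∑ i ∈ Finset.range r, ∑ k, u (i + 1) k • a (i + 1) k with hz
  have hznorm : ‖z‖ ≤ (1 + M * h) * √c := by
    have hb : ‖∑ i ∈ Finset.range r, ∑ k, u (i + 1) k • a (i + 1) k‖ ≤ M * (h * √c) := by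
      rw [hM, Finset.sum_mul]
      refine norm_sum_le_of_le _ fun i hi => ?_
      rw [Finset.sum_mul]
      refine norm_sum_le_of_le _ fun k _ => ?_
      rw [norm_smul, Real.norm_eq_abs, mul_comm]
      exact mul_le_mul_of_nonneg_left (hcoef i hi k) (norm_nonneg _)
    calc ‖z‖ ≤ √c + M * (h * √c) := (norm_add_le _ _).trans (add_le_add hzero hb)
      _ = (1 + M * h) * √c := by ring
  have hle : gzero d (N 0) (X 0) v ≤ ∑ j, (z j) ^ 2 :=
    csInf_le (gzero_bddBelow _ _) ⟨fun j => z j, ha r u v hv hu, rfl⟩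
  rw [div_le_iff₀ (by positivity)]
  calc gzero d (N 0) (X 0) v ≤ ∑ j, (z j) ^ 2 := hle
    _ = ‖z‖ ^ 2 := (EuclideanSpace.real_norm_sq_eq z).symm
    _ ≤ ((1 + M * h) * √c) ^ 2 := by gcongr
    _ = c * (1 + M * h) ^ 2 := by rw [mul_pow, Real.sq_sqrt hc0, mul_comm]

/-- For every `X ∈ D₀ := span{X^{01},…,X^{0N₀}}`, `g^h(X) → g^0(X)` as `h → 0⁺`. -/
theorem gh_tendsto_gzero (d r : ℕ) (hd : 1 ≤ d) (N : ℕ → ℕ) (hN : ∀ i ≤ r, 1 ≤ N i)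
    (X : (i : ℕ) → Fin (N i) → (Fin d → ℝ))
    (hspan : Submodule.span ℝ {x : Fin d → ℝ | ∃ i ≤ r, ∃ j, x = X i j} = ⊤)
    (v : Fin d → ℝ) (hv : v ∈ Submodule.span ℝ (Set.range (X 0))) :
    Filter.Tendsto (fun h : ℝ => gh d r N X h v)
      (nhdsWithin 0 (Set.Ioi 0)) (nhds (gzero d (N 0) (X 0) v)) := by
  obtain ⟨M, hM0, hM⟩ := gzero_le_gh (r := r) X
  have hpos : ∀ᶠ h : ℝ in nhdsWithin 0 (Set.Ioi 0), 0 < h := self_mem_nhdsWithin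
  have hle1 : ∀ᶠ h : ℝ in nhdsWithin 0 (Set.Ioi 0), h ≤ 1 :=
    nhdsWithin_le_nhds (Iic_mem_nhds one_pos)
  have hlow : Filter.Tendsto (fun h : ℝ => gzero d (N 0) (X 0) v / (1 + M * h) ^ 2)
      (nhdsWithin 0 (Set.Ioi 0)) (nhds (gzero d (N 0) (X 0) v)) := by
    have hcont : ContinuousAt (fun h : ℝ => gzero d (N 0) (X 0) v / (1 + M * h) ^ 2) 0 :=
      ContinuousAt.div (by fun_prop) (by fun_prop) (by simp)
    simpa using hcont.tendsto.mono_left nhdsWithin_le_nhds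
  refine tendsto_of_tendsto_of_tendsto_of_le_of_le' hlow tendsto_const_nhds ?_ ?_
  · filter_upwards [hpos, hle1] with h hh h1 using hM v hv h hh h1
  · filter_upwards [hpos] with h hh using gh_le_gzero X hv hh
end

section
/- Assume that for every i the matrix Ā_i has rank n_i − n_{i-1} (equivalently, each M_i is invertible). Then, with ς := Σ_{i=1}^r i·(n_i − n_{i-1}), one has lim_{h→0⁺} h^{−2ς} det(Σ_{i=0}^r h^{2i} A_iᵀ A_i) = Π_{i=0}^r det(M_i); that is, det(Σ_{i=0}^r h^{2i} A_iᵀ A_i) is asymptotic to h^{2ς} Π_{i=0}^r det(M_i) as h → 0⁺. -/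
/-!
Let the level `s k ≤ r` of a column `k` be the index with `n_{s k - 1} ≤ k < n_{s k}`. Since the
columns of `A_i` of level greater than `i` vanish, one can factor
`∑ h^{2i} A_iᵀ A_i = D(h) G(h) D(h)` with `D(h) = diag (h^{s k})` and `G` polynomial in `h`
(`gradedGram_factor`), so that `h^{-2ς} det (∑ h^{2i} A_iᵀ A_i) = det G(h)` for `h ≠ 0`, and the
limit is `det G(0)` by continuity. Only the terms with `2i = s k + s l` survive in `G(0)`; together
with `s k, s l ≤ i` this forces `s k = s l = i` (`gradedGram_zero`), so `G(0)` is block diagonal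
with blocks `M_i`.
-/

open scoped BigOperators
open Matrix

/-- The rescaled Gram matrix `G(h) = D(h)⁻¹ (∑ h^{2i} B_i) D(h)⁻¹`, `D(h) = diag (h^{s k})`, written
so that it also makes sense at `h = 0`. The natural-number subtraction truncates only in
terms with `2i < s k + s l`, where `B_i k l = 0` in the situations considered. -/
def gradedGram {d : ℕ} (r : ℕ) (s : Fin d → ℕ) (B : ℕ → Matrix (Fin d) (Fin d) ℝ) (h : ℝ) :
    Matrix (Fin d) (Fin d) ℝ :=
  Matrix.of fun k l => ∑ i ∈ Finset.range (r + 1), h ^ (2 * i - (s k + s l)) * B i k l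

lemma continuous_det_gradedGram {d : ℕ} (r : ℕ) (s : Fin d → ℕ)
    (B : ℕ → Matrix (Fin d) (Fin d) ℝ) : Continuous fun h => (gradedGram r s B h).det := by
  apply Continuous.matrix_det
  refine continuous_matrix fun k l => ?_
  simp only [gradedGram, Matrix.of_apply]
  fun_prop

lemma gradedGram_factor {d r : ℕ} {s : Fin d → ℕ} {B : ℕ → Matrix (Fin d) (Fin d) ℝ}
    (hB : ∀ i ≤ r, ∀ k l, B i k l ≠ 0 → s k ≤ i ∧ s l ≤ i) (h : ℝ) :
    ∑ i ∈ Finset.range (r + 1), h ^ (2 * i) • B i =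
      diagonal (fun k => h ^ s k) * gradedGram r s B h * diagonal (fun k => h ^ s k) := by
  ext k l
  rw [Matrix.mul_diagonal, Matrix.diagonal_mul, Matrix.sum_apply]
  simp only [gradedGram, Matrix.of_apply, Finset.mul_sum, Finset.sum_mul, Matrix.smul_apply,
    smul_eq_mul]
  refine Finset.sum_congr rfl fun i hi => ?_
  by_cases h0 : B i k l = 0
  · simp [h0]
  · obtain ⟨h1, h2⟩ := hB i (Nat.lt_succ_iff.mp (Finset.mem_range.mp hi)) k l h0
    have : 2 * i = s k + (2 * i - (s k + s l)) + s l := by omega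
    conv_lhs => rw [this]
    rw [pow_add, pow_add]
    ring

lemma det_gradedGram_factor {d r : ℕ} {s : Fin d → ℕ} {B : ℕ → Matrix (Fin d) (Fin d) ℝ}
    (hB : ∀ i ≤ r, ∀ k l, B i k l ≠ 0 → s k ≤ i ∧ s l ≤ i) (h : ℝ) :
    (∑ i ∈ Finset.range (r + 1), h ^ (2 * i) • B i).det =
      h ^ (2 * ∑ k, s k) * (gradedGram r s B h).det := by
  rw [gradedGram_factor hB, det_mul, det_mul, det_diagonal, Finset.prod_pow_eq_pow_sum, two_mul,
    pow_add]
  ring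

lemma gradedGram_zero {d r : ℕ} {s : Fin d → ℕ} {B : ℕ → Matrix (Fin d) (Fin d) ℝ}
    (hs : ∀ k, s k ≤ r) (hB : ∀ i ≤ r, ∀ k l, B i k l ≠ 0 → s k ≤ i ∧ s l ≤ i) (k l : Fin d) :
    gradedGram r s B 0 k l = if s k = s l then B (s k) k l else 0 := by
  have key : ∀ i ∈ Finset.range (r + 1), ¬ (s k = i ∧ s l = i) →
      (0 : ℝ) ^ (2 * i - (s k + s l)) * B i k l = 0 := by
    intro i hi hne
    by_cases h0 : B i k l = 0
    · simp [h0]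
    · obtain ⟨h1, h2⟩ := hB i (Nat.lt_succ_iff.mp (Finset.mem_range.mp hi)) k l h0
      rw [zero_pow (by omega), zero_mul]
  simp only [gradedGram, Matrix.of_apply]
  split_ifs with h
  · rw [Finset.sum_eq_single (s k)]
    · simp [← h, two_mul]
    · exact fun i hi hne => key i hi fun h' => hne h'.1.symm
    · intro h'
      exact absurd (Finset.mem_range.mpr (Nat.lt_succ_of_le (hs k))) h'
  · exact Finset.sum_eq_zero fun i hi => key i hi fun h' => h (h'.1.trans h'.2.symm)

lemma level_mono {r : ℕ} {n nprev : ℕ → ℕ} (hnprevS : ∀ i : ℕ, nprev (i + 1) = n i)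
    (hmono : ∀ i ≤ r, nprev i ≤ n i) : ∀ j ≤ r, ∀ i ≤ j, n i ≤ n j := by
  intro j
  induction j with
  | zero => intro _ i hi; rw [Nat.le_zero.mp hi]
  | succ j ih =>
    intro hj i hi
    rcases Nat.le_succ_iff.mp hi with h | h
    · have := hmono (j + 1) hj
      rw [hnprevS] at this
      exact (ih (by omega) i h).trans this
    · rw [h]

/-- Every column `k < d` has a level, the least `i` with `k < n i`. Equivalently, the intervals
`[nprev i, n i)`, `i ≤ r`, partition the columns. -/
lemma exists_level {d r : ℕ} {n nprev : ℕ → ℕ}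
    (hnprev0 : nprev 0 = 0) (hnprevS : ∀ i : ℕ, nprev (i + 1) = n i)
    (hmono : ∀ i ≤ r, nprev i ≤ n i) (hnr : n r = d) :
    ∃ s : Fin d → Fin (r + 1), (∀ i ≤ r, ∀ k : Fin d, (k : ℕ) < n i → (s k : ℕ) ≤ i) ∧
      ∀ (i : Fin (r + 1)) (k : Fin d), s k = i ↔ nprev i ≤ k ∧ (k : ℕ) < n i := by
  classical
  have hex : ∀ k : Fin d, ∃ i, (k : ℕ) < n i := fun k => ⟨r, hnr ▸ k.2⟩
  have hmon := level_mono hnprevS hmono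
  refine ⟨fun k => ⟨Nat.find (hex k),
    Nat.lt_succ_of_le (Nat.find_min' (hex k) (hnr ▸ k.2))⟩,
    fun i _ k hk => Nat.find_min' (hex k) hk, fun i k => ?_⟩
  rw [Fin.ext_iff]
  simp only [Nat.find_eq_iff]
  rw [and_comm]
  refine and_congr_left fun _ => ?_
  obtain ⟨i, hi⟩ := i
  cases i with
  | zero => simp [hnprev0]
  | succ i =>
    simp only [hnprevS]
    constructor
    · intro h
      exact not_lt.mp (h i (Nat.lt_succ_self i))
    · intro h m hm hlt
      have := hmon i (by omega) m (by omega)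
      omega

/-- For `b ≤ d`, the order-preserving enumeration `x ↦ a + x` of the indices in `[a, b)`, given as
a subtype of `Fin d` through any predicate `p` equivalent to membership. -/
def intervalEquiv {d a b : ℕ} (hb : b ≤ d) (p : Fin d → Prop)
    (hp : ∀ k, p k ↔ a ≤ (k : ℕ) ∧ (k : ℕ) < b) : Fin (b - a) ≃ {k : Fin d // p k} where
  toFun x := ⟨⟨a + x, by omega⟩, (hp _).mpr ⟨by simp, by simp only []; omega⟩⟩
  invFun k := ⟨(k : Fin d) - a, by have := (hp _).mp k.2; omega⟩
  left_inv x := by ext; simp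
  right_inv k := by
    have := (hp _).mp k.2
    ext
    simp only []
    omega

/-- In an adapted frame, with `A_i` the bracket matrices (vanishing in columns beyond `n_i`),
`Ā_i` obtained from `A_i` by zeroing the first `n_{i-1}` columns, and `M_i` the
`(n_i − n_{i-1}) × (n_i − n_{i-1})` diagonal block of `Ā_iᵀ Ā_i` with row/column indices in
`{n_{i-1}+1, …, n_i}`: if every `Ā_i` has full rank `n_i − n_{i-1}`, then with
`ς = ∑_{i=1}^r i (n_i − n_{i-1})`,
`lim_{h→0⁺} h^{−2ς} det (∑_{i=0}^r h^{2i} A_iᵀ A_i) = ∏_{i=0}^r det M_i`. -/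
theorem det_asymptotics_adapted (d r : ℕ) (hd : 1 ≤ d)
    (N : ℕ → ℕ) (hN : ∀ i ≤ r, 1 ≤ N i)
    (n : ℕ → ℕ) (nprev : ℕ → ℕ)
    (hnprev0 : nprev 0 = 0) (hnprevS : ∀ i : ℕ, nprev (i + 1) = n i)
    (hmono : ∀ i ≤ r, nprev i ≤ n i) (hnr : n r = d)
    (A : (i : ℕ) → Matrix (Fin (N i)) (Fin d) ℝ)
    -- the entries of `A_i` in columns `n_i + 1, …, d` vanish
    (hAcols : ∀ i ≤ r, ∀ (j : Fin (N i)) (k : Fin d), n i ≤ (k : ℕ) → A i j k = 0)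
    -- `Ā_i` is `A_i` with the entries in columns `1, …, n_{i-1}` replaced by `0`
    (Abar : (i : ℕ) → Matrix (Fin (N i)) (Fin d) ℝ)
    (hAbar : ∀ (i : ℕ) (j : Fin (N i)) (k : Fin d),
      Abar i j k = if (k : ℕ) < nprev i then 0 else A i j k)
    -- `M_i` is the `(n_i − n_{i-1})`-square block of `Ā_iᵀ Ā_i` with indices in
    -- `{n_{i-1}+1, …, n_i}`
    (M : (i : ℕ) → Matrix (Fin (n i - nprev i)) (Fin (n i - nprev i)) ℝ)
    (hM : ∀ i ≤ r, ∀ (a b : Fin (n i - nprev i)) (a' b' : Fin d),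
      (a' : ℕ) = nprev i + (a : ℕ) → (b' : ℕ) = nprev i + (b : ℕ) →
      M i a b = ((Abar i)ᵀ * Abar i) a' b')
    -- each `Ā_i` has rank `n_i − n_{i-1}` (equivalently each `M_i` is invertible)
    (hrank : ∀ i ≤ r, (Abar i).rank = n i - nprev i)
    (ς : ℕ) (hς : ς = ∑ i ∈ Finset.Icc 1 r, i * (n i - n (i - 1))) :
    Filter.Tendsto
      (fun h : ℝ => h ^ (-(2 * (ς : ℤ))) *
        (∑ i ∈ Finset.range (r + 1), h ^ (2 * i) • ((A i)ᵀ * A i)).det)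
      (nhdsWithin 0 (Set.Ioi 0))
      (nhds (∏ i ∈ Finset.range (r + 1), (M i).det)) := by
  
  obtain ⟨s, hsle, hs⟩ := exists_level hnprev0 hnprevS hmono hnr
  have hnd : ∀ i : Fin (r + 1), n i ≤ d := fun i =>
    hnr ▸ level_mono hnprevS hmono r le_rfl i (Nat.lt_succ_iff.mp i.2)
  let e : ∀ i : Fin (r + 1), Fin (n i - nprev i) ≃ {k : Fin d // s k = i} := fun i =>
    intervalEquiv (hnd i) _ (hs i)
  let s' : Fin d → ℕ := fun k => s k
  let B : ℕ → Matrix (Fin d) (Fin d) ℝ := fun i => (A i)ᵀ * A i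
  have hs' : ∀ k, s' k ≤ r := fun k => Nat.lt_succ_iff.mp (s k).2
  have hB : ∀ i ≤ r, ∀ k l, B i k l ≠ 0 → s' k ≤ i ∧ s' l ≤ i := by
    intro i hi k l hne
    constructor
    · refine hsle i hi k (not_le.mp fun hk => hne ?_)
      simp [B, Matrix.mul_apply, hAcols i hi _ k hk]
    · refine hsle i hi l (not_le.mp fun hl => hne ?_)
      simp [B, Matrix.mul_apply, hAcols i hi _ l hl]
  -- level `i` contains `n i - nprev i` columns, each contributing `i` to the exponent
  have hsum : ς = ∑ k, s' k := by
    have h1 : ∑ k, s' k = ∑ i : Fin (r + 1), (i : ℕ) * (n i - nprev i) := by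
      rw [← Finset.sum_fiberwise Finset.univ s s']
      refine Finset.sum_congr rfl fun i _ => ?_
      rw [Finset.sum_congr rfl (g := fun _ => (i : ℕ))
        (fun k hk => by simp [s', (Finset.mem_filter.mp hk).2]), Finset.sum_const, smul_eq_mul,
        mul_comm, ← Fintype.card_subtype, ← Fintype.card_congr (e i), Fintype.card_fin]
    rw [h1, Fin.sum_univ_eq_sum_range (fun i => i * (n i - nprev i)) (r + 1), hς,
      Finset.sum_range_succ', Finset.range_eq_Ico, Finset.sum_Ico_add' (fun i => i * (n i - nprev i))]
    simp only [zero_mul, add_zero, zero_add]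
    refine Finset.sum_congr (by ext; simp) fun i hi => ?_
    obtain ⟨j, rfl⟩ : ∃ j, i = j + 1 := ⟨i - 1, by simp at hi; omega⟩
    rw [hnprevS, Nat.add_sub_cancel]
  have hblock : (gradedGram r s' B 0).BlockTriangular s := by
    intro k l hlt
    rw [gradedGram_zero hs' hB, if_neg]
    exact fun h => hlt.ne' (Fin.ext h)
  have hdet : (gradedGram r s' B 0).det = ∏ i ∈ Finset.range (r + 1), (M i).det := by
    rw [hblock.det_fintype, ← Fin.prod_univ_eq_prod_range (fun i => (M i).det)]
    refine Finset.prod_congr rfl fun i _ => ?_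
    rw [← Matrix.det_submatrix_equiv_self (e i)]
    congr 1
    ext a b
    have ha := (e i a).2
    have hb := (e i b).2
    have hai := ((hs _ _).mp ha).1
    have hbi := ((hs _ _).mp hb).1
    rw [hM i (Nat.lt_succ_iff.mp i.2) a b (e i a) (e i b) rfl rfl]
    simp only [Matrix.submatrix_apply, Matrix.toSquareBlock_def, Matrix.of_apply]
    rw [gradedGram_zero hs' hB, if_pos (by simp only [s', ha, hb])]
    simp only [s', B, ha, Matrix.mul_apply, Matrix.transpose_apply, hAbar, if_neg (not_lt.mpr hai),
      if_neg (not_lt.mpr hbi)]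
  rw [← hdet]
  refine Filter.Tendsto.congr' ?_
    ((continuous_det_gradedGram r s' B).tendsto 0 |>.mono_left nhdsWithin_le_nhds)
  filter_upwards [self_mem_nhdsWithin] with h hh
  have hne : h ≠ 0 := ne_of_gt hh
  rw [det_gradedGram_factor hB, ← hsum, ← mul_assoc, ← zpow_natCast h (2 * ς), ← zpow_add₀ hne]
  simp
end

section
/- For every x ∈ ℝ, every h > 0 and every (a,b,c) ∈ ℝ³: inf{ u₁² + u₂² + h⁻²(u₃² + u₄²) + h⁻⁴(u₅² + u₆²) : (u₁,…,u₆) ∈ ℝ⁶, u₁·(1,0,0) + u₂·(0,1,x²/2) + u₃·(0,0,x) + u₄·(0,0,−x) + u₅·(0,0,1) + u₆·(0,0,−1) = (a,b,c) } = a² + b² + (2c − b x²)² / (8 h² (h² + x²)). -/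
/-!
Put `d = c - b x² / 2`, `p = u 2 - u 3` and `q = u 4 - u 5`. The constraint says `u 0 = a`, `u 1 = b`
and `x p + q = d`, so the cost exceeds `a² + b²` by a weighted quadratic form that is to be minimized
on a hyperplane. Lagrange multipliers give the minimizer `u 2 = -u 3 = m x`, `u 4 = -u 5 = m h²` with
`m = d / (2 (h² + x²))`, and the lower bound is Cauchy-Schwarz, in the form of an exact sum of squares
for the gap between the cost and its minimum. The infimum is thus attained, so the set is nonempty and
bounded below and `sInf` takes no default value.
-/

/-- Explicit computation of the approximating metric `g^h` for the Martinet structure on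
`ℝ³`: for all `x ∈ ℝ`, `h > 0` and `(a,b,c) ∈ ℝ³`,
`inf { u₁² + u₂² + h⁻²(u₃² + u₄²) + h⁻⁴(u₅² + u₆²) :
   u₁(1,0,0) + u₂(0,1,x²/2) + u₃(0,0,x) + u₄(0,0,−x) + u₅(0,0,1) + u₆(0,0,−1) = (a,b,c) }
  = a² + b² + (2c − bx²)²/(8h²(h² + x²))`. -/
theorem martinet_gh (x h a b c : ℝ) (hpos : 0 < h) :
    sInf { s : ℝ | ∃ u : Fin 6 → ℝ,
      u 0 • (![1, 0, 0] : Fin 3 → ℝ) + u 1 • ![0, 1, x ^ 2 / 2] + u 2 • ![0, 0, x] +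
        u 3 • ![0, 0, -x] + u 4 • ![0, 0, 1] + u 5 • ![0, 0, -1] = ![a, b, c] ∧
      s = (u 0) ^ 2 + (u 1) ^ 2 + h ^ (-2 : ℤ) * ((u 2) ^ 2 + (u 3) ^ 2) +
        h ^ (-4 : ℤ) * ((u 4) ^ 2 + (u 5) ^ 2) }
    = a ^ 2 + b ^ 2 + (2 * c - b * x ^ 2) ^ 2 / (8 * h ^ 2 * (h ^ 2 + x ^ 2)) := by
  apply IsLeast.csInf_eq
  have hh : h ≠ 0 := hpos.ne'
  have hD : h ^ 2 + x ^ 2 ≠ 0 := by positivity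
  have z2 : h ^ (-2 : ℤ) = 1 / h ^ 2 := by
    rw [zpow_neg, one_div]; norm_cast
  have z4 : h ^ (-4 : ℤ) = 1 / h ^ 4 := by
    rw [zpow_neg, one_div]; norm_cast
  rw [z2, z4]
  constructor
  · obtain ⟨m, hm⟩ : ∃ m : ℝ, m = (2 * c - b * x ^ 2) / (4 * (h ^ 2 + x ^ 2)) := ⟨_, rfl⟩
    have hc : c = b * x ^ 2 / 2 + 2 * m * (h ^ 2 + x ^ 2) := by
      rw [hm]; field_simp; ring
    refine ⟨![a, b, m * x, -(m * x), m * h ^ 2, -(m * h ^ 2)], ?_, ?_⟩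
    · ext i
      fin_cases i
      · simp
      · simp
      · simp
        rw [hc]; ring
    · simp only [Matrix.cons_val]
      rw [hc]; field_simp; ring
  · rintro s ⟨u, hu, rfl⟩
    have h0 : u 0 = a := by simpa using congrFun hu 0
    have h1 : u 1 = b := by simpa using congrFun hu 1
    have h2 : c = u 1 * (x ^ 2 / 2) + x * (u 2 - u 3) + (u 4 - u 5) := by
      have := congrFun hu 2
      simp at this
      linarith
    rw [← sub_nonneg]
    -- The first two squares vanish for antisymmetric controls, the last one is the
    -- Cauchy-Schwarz defect of `(x p + q)²`.
    have key : (u 0) ^ 2 + (u 1) ^ 2 + 1 / h ^ 2 * ((u 2) ^ 2 + (u 3) ^ 2) +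
        1 / h ^ 4 * ((u 4) ^ 2 + (u 5) ^ 2) -
        (a ^ 2 + b ^ 2 + (2 * c - b * x ^ 2) ^ 2 / (8 * h ^ 2 * (h ^ 2 + x ^ 2))) =
        (u 2 + u 3) ^ 2 / (2 * h ^ 2) + (u 4 + u 5) ^ 2 / (2 * h ^ 4) +
        (h ^ 2 * (u 2 - u 3) - x * (u 4 - u 5)) ^ 2 / (2 * h ^ 4 * (h ^ 2 + x ^ 2)) := by
      rw [h2, ← h0, ← h1]; field_simp; ring
    rw [key]
    positivity
end

section
/- For every (x,y) ∈ ℝ², every h > 0 and every (a,b,c,d) ∈ ℝ⁴: inf{ u₁² + u₂² + u₃² + h⁻²(u₄² + u₅² + u₆² + u₇²) : (u₁,…,u₇) ∈ ℝ⁷, u₁·e₁ + u₂·e₂ + u₃·(x e₃ + y e₄) + u₄·e₄ + u₅·(−e₄) + u₆·e₃ + u₇·(−e₃) = (a,b,c,d) } = a² + b² + ((c y − d x)² + 2h²(c² + d²)) / (2 h² (2h² + x² + y²)), where e₁,…,e₄ is the standard basis of ℝ⁴. -/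
/-!
Eliminating the bracket controls through the constraints `c = u₂ x + (u₅ - u₆)` and
`d = u₂ y + (u₃ - u₄)` (0-based indices) leaves a sum of squares: with `D = 2h² + x² + y²`, the cost
exceeds the claimed value by
`((u₃ + u₄)² + (u₅ + u₆)² + D (u₂ - (c x + d y) / D)²) / (2h²)`
(`rank3_gh_cost_eq`). Hence the claimed value is a lower bound, attained by splitting each bracket
contribution evenly between a field and its opposite, and taking `u₂ = (c x + d y) / D`; the infimum
is a minimum.
-/

/-- Completion of the square in the cost, where `w` is the control of `x e₃ + y e₄`, the controls
`p, q` act along `e₄, -e₄` and `r, s` along `e₃, -e₃`, so that `w x + r - s` and `w y + p - q` are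
the last two coordinates reached. -/
theorem rank3_gh_cost_eq (x y h w p q r s : ℝ) (hpos : 0 < h) :
    w ^ 2 + h ^ (-2 : ℤ) * (p ^ 2 + q ^ 2 + r ^ 2 + s ^ 2) =
      (((w * x + r - s) * y - (w * y + p - q) * x) ^ 2 +
          2 * h ^ 2 * ((w * x + r - s) ^ 2 + (w * y + p - q) ^ 2)) /
        (2 * h ^ 2 * (2 * h ^ 2 + x ^ 2 + y ^ 2)) +
      ((p + q) ^ 2 + (r + s) ^ 2 + (2 * h ^ 2 + x ^ 2 + y ^ 2) *
        (w - ((w * x + r - s) * x + (w * y + p - q) * y) / (2 * h ^ 2 + x ^ 2 + y ^ 2)) ^ 2) /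
        (2 * h ^ 2) := by
  have hD : 2 * h ^ 2 + x ^ 2 + y ^ 2 ≠ 0 := by positivity
  have hinv : h ^ (-2 : ℤ) = 1 / h ^ 2 := by
    rw [zpow_neg, one_div]
    norm_cast
  rw [hinv]
  field_simp
  ring


/-- Explicit computation of the approximating metric `g^h` for the rank-3 structure on `ℝ⁴`
generated by `X^{01} = e₁`, `X^{02} = e₂`, `X^{03} = x e₃ + y e₄`, with brackets
`±e₄, ±e₃` weighted by `h⁻²`: for all `(x,y) ∈ ℝ²`, `h > 0` and `(a,b,c,d) ∈ ℝ⁴`,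
`inf { u₁² + u₂² + u₃² + h⁻²(u₄² + u₅² + u₆² + u₇²) :
   u₁e₁ + u₂e₂ + u₃(x e₃ + y e₄) + u₄e₄ + u₅(−e₄) + u₆e₃ + u₇(−e₃) = (a,b,c,d) }
  = a² + b² + ((cy − dx)² + 2h²(c² + d²)) / (2h²(2h² + x² + y²))`. -/
theorem rank3_gh (x y h a b c d : ℝ) (hpos : 0 < h) :
    sInf { s : ℝ | ∃ u : Fin 7 → ℝ,
      u 0 • (![1, 0, 0, 0] : Fin 4 → ℝ) + u 1 • ![0, 1, 0, 0] + u 2 • ![0, 0, x, y] +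
        u 3 • ![0, 0, 0, 1] + u 4 • ![0, 0, 0, -1] + u 5 • ![0, 0, 1, 0] +
        u 6 • ![0, 0, -1, 0] = ![a, b, c, d] ∧
      s = (u 0) ^ 2 + (u 1) ^ 2 + (u 2) ^ 2 +
        h ^ (-2 : ℤ) * ((u 3) ^ 2 + (u 4) ^ 2 + (u 5) ^ 2 + (u 6) ^ 2) }
    = a ^ 2 + b ^ 2 +
      ((c * y - d * x) ^ 2 + 2 * h ^ 2 * (c ^ 2 + d ^ 2)) /
        (2 * h ^ 2 * (2 * h ^ 2 + x ^ 2 + y ^ 2)) := by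
  apply IsLeast.csInf_eq
  constructor
  · set w := (c * x + d * y) / (2 * h ^ 2 + x ^ 2 + y ^ 2) with hw
    refine ⟨![a, b, w, (d - w * y) / 2, -((d - w * y) / 2),
      (c - w * x) / 2, -((c - w * x) / 2)], ?_, ?_⟩
    · ext i
      fin_cases i <;> simp <;> ring
    · have key := rank3_gh_cost_eq x y h w ((d - w * y) / 2) (-((d - w * y) / 2))
        ((c - w * x) / 2) (-((c - w * x) / 2)) hpos
      have e1 : w * x + (c - w * x) / 2 - -((c - w * x) / 2) = c := by ring
      have e2 : w * y + (d - w * y) / 2 - -((d - w * y) / 2) = d := by ring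
      -- At these controls all three excess squares vanish.
      rw [e1, e2, ← hw] at key
      simp only [add_neg_cancel, sub_self, ne_eq, OfNat.ofNat_ne_zero, not_false_eq_true,
        zero_pow, mul_zero, add_zero, zero_div] at key
      change _ = a ^ 2 + b ^ 2 + w ^ 2 + h ^ (-2 : ℤ) * (((d - w * y) / 2) ^ 2 +
        (-((d - w * y) / 2)) ^ 2 + ((c - w * x) / 2) ^ 2 + (-((c - w * x) / 2)) ^ 2)
      linarith
  · rintro _ ⟨u, hu, rfl⟩
    have h0 : u 0 = a := by simpa using congrFun hu 0
    have h1 : u 1 = b := by simpa using congrFun hu 1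
    have h2 : u 2 * x + u 5 - u 6 = c := by
      have := congrFun hu 2
      simp at this
      linarith
    have h3 : u 2 * y + u 3 - u 4 = d := by
      have := congrFun hu 3
      simp at this
      linarith
    have key := rank3_gh_cost_eq x y h (u 2) (u 3) (u 4) (u 5) (u 6) hpos
    rw [h2, h3] at key
    have excess_nonneg : 0 ≤ ((u 3 + u 4) ^ 2 + (u 5 + u 6) ^ 2 + (2 * h ^ 2 + x ^ 2 + y ^ 2) *
        (u 2 - (c * x + d * y) / (2 * h ^ 2 + x ^ 2 + y ^ 2)) ^ 2) / (2 * h ^ 2) := by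
      positivity
    rw [h0, h1]
    linarith
end
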